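/- Let (Y₁, Y₂, Y₃) be a representation of the Kronecker quiver Q₃ with dimension vector (2,2) that is Θ-semistable but not Θ-stable for Θ = (−1, 1). Then the closure of its GL₂(ℂ) × GL₂(ℂ)-orbit in (M₂(ℂ))³ (standard topology) contains a triple of diagonal matrices (diag(a₁, d₁), diag(a₂, d₂), diag(a₃, d₃)) with (a₁, a₂, a₃) ≠ (0,0,0) and (d₁, d₂, d₃) ≠ (0,0,0); that is, every strictly semistable representation degenerates to a direct sum of two nonzero representations of dimension vector (1,1). (The Lemma of Section 5 in representation-theoretic terms.) -/

import Mathlib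

open Matrix

noncomputable section

/-- The underlying vector space `ℂ²`. -/
abbrev V2 : Type := Fin 2 → ℂ

/-- 2×2 complex matrices. -/
abbrev M2 : Type := Matrix (Fin 2) (Fin 2) ℂ

/-- `Θ`-semistability (`Θ = (-1,1)`) of a representation of the Kronecker quiver
`Q₃` with dimension vector `(2,2)`: `-dim W₁ + dim W₂ ≥ 0` for every
subrepresentation `(W₁, W₂)`. -/
def ThetaSemistable (Y : Fin 3 → M2) : Prop :=
  ∀ W₁ W₂ : Submodule ℂ V2, (∀ i, W₁.map (Y i).mulVecLin ≤ W₂) →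
    (0 : ℤ) ≤ -(Module.finrank ℂ W₁ : ℤ) + (Module.finrank ℂ W₂ : ℤ)

/-- `Θ`-stability (`Θ = (-1,1)`): `-dim W₁ + dim W₂ > 0` for every
subrepresentation other than `(0,0)` and `(ℂ²,ℂ²)`. -/
def ThetaStable (Y : Fin 3 → M2) : Prop :=
  ∀ W₁ W₂ : Submodule ℂ V2, (∀ i, W₁.map (Y i).mulVecLin ≤ W₂) →
    ¬(W₁ = ⊥ ∧ W₂ = ⊥) → ¬(W₁ = ⊤ ∧ W₂ = ⊤) →
    (0 : ℤ) < -(Module.finrank ℂ W₁ : ℤ) + (Module.finrank ℂ W₂ : ℤ)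

/-!
A strictly semistable representation has a subrepresentation `(V₁, W₁)` with
`0 < dim V₁ = dim W₁ < dim V`. In bases adapted to it all arrows are block upper triangular, and
conjugation by the one-parameter subgroup scaling the first block by `t` multiplies the off-diagonal
block by `t`; letting `t → 0` leaves the direct sum of the subrepresentation and the quotient.
This limit `X` is again semistable: if `X` maps `V₂` into `W₂`, then the original representation
maps `V₂ ⊓ V₁` into `W₂ ⊓ W₁` and `V₂ ⊔ V₁` into `W₂ ⊔ W₁`, and the dimension formula applies.
Hence `X` has no common kernel, so that in dimension `(2, 2)` both diagonal entries are nonzero.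
-/

open Module Set Filter Topology
open scoped MatrixGroups

section LinearMaps

variable {ι K V W V' W' : Type*} [Field K] [AddCommGroup V] [Module K V] [AddCommGroup W]
  [Module K W] [AddCommGroup V'] [Module K V'] [AddCommGroup W'] [Module K W']
  {f g : ι → V →ₗ[K] W}

/-- `Θ`-semistability, `Θ = (-1, 1)`, of a representation `f` of the Kronecker quiver with arrows
indexed by `ι`. It is phrased so that `ThetaSemistable Y` unfolds to the case
`f i = (Y i).mulVecLin`. -/
def KroneckerSemistable (f : ι → V →ₗ[K] W) : Prop :=
  ∀ (V₁ : Submodule K V) (W₁ : Submodule K W), (∀ i, V₁.map (f i) ≤ W₁) →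
    (0 : ℤ) ≤ -(finrank K V₁ : ℤ) + (finrank K W₁ : ℤ)

/-- `Θ`-stability, `Θ = (-1, 1)`, of a representation `f` of the Kronecker quiver with arrows
indexed by `ι`. It is phrased so that `ThetaStable Y` unfolds to the case
`f i = (Y i).mulVecLin`. -/
def KroneckerStable (f : ι → V →ₗ[K] W) : Prop :=
  ∀ (V₁ : Submodule K V) (W₁ : Submodule K W), (∀ i, V₁.map (f i) ≤ W₁) →
    ¬(V₁ = ⊥ ∧ W₁ = ⊥) → ¬(V₁ = ⊤ ∧ W₁ = ⊤) →
    (0 : ℤ) < -(finrank K V₁ : ℤ) + (finrank K W₁ : ℤ)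

namespace KroneckerSemistable

theorem finrank_le (hf : KroneckerSemistable f) {V₁ : Submodule K V} {W₁ : Submodule K W}
    (h : ∀ i, V₁.map (f i) ≤ W₁) : finrank K V₁ ≤ finrank K W₁ := by
  have := hf V₁ W₁ h
  lia

theorem of_finrank_le (h : ∀ (V₁ : Submodule K V) (W₁ : Submodule K W),
    (∀ i, V₁.map (f i) ≤ W₁) → finrank K V₁ ≤ finrank K W₁) : KroneckerSemistable f := by
  intro V₁ W₁ hVW
  have := h V₁ W₁ hVW
  lia

theorem iInf_ker_eq_bot [FiniteDimensional K V] (hf : KroneckerSemistable f) :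
    ⨅ i, (f i).ker = ⊥ := by
  have hle : finrank K ↥(⨅ i, (f i).ker) ≤ finrank K (⊥ : Submodule K W) :=
    hf.finrank_le fun i => LinearMap.le_ker_iff_map.mp (iInf_le _ i) |>.le
  rw [finrank_bot] at hle
  exact Submodule.finrank_eq_zero.mp (Nat.le_zero.mp hle)

theorem conj (hf : KroneckerSemistable f) (e₁ : V ≃ₗ[K] V') (e₂ : W ≃ₗ[K] W') :
    KroneckerSemistable fun i => e₂.toLinearMap ∘ₗ f i ∘ₗ e₁.symm.toLinearMap := by
  refine of_finrank_le fun V₁ W₁ h => ?_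
  have hsub : ∀ i, (V₁.map e₁.symm.toLinearMap).map (f i) ≤ W₁.map e₂.symm.toLinearMap := by
    rintro i _ ⟨_, ⟨x, hx, rfl⟩, rfl⟩
    exact ⟨_, h i ⟨x, hx, rfl⟩, e₂.symm_apply_apply _⟩
  simpa only [LinearEquiv.finrank_map_eq] using hf.finrank_le hsub

theorem exists_finrank_eq_of_not_stable [FiniteDimensional K V] [FiniteDimensional K W]
    (hf : KroneckerSemistable f) (hns : ¬KroneckerStable f) (hVW : finrank K V = finrank K W) :
    ∃ (V₁ : Submodule K V) (W₁ : Submodule K W), (∀ i, V₁.map (f i) ≤ W₁) ∧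
      finrank K V₁ = finrank K W₁ ∧ 0 < finrank K V₁ ∧ finrank K V₁ < finrank K V := by
  unfold KroneckerStable at hns
  push Not at hns
  obtain ⟨V₁, W₁, hsub, hbot, htop, hle⟩ := hns
  have heq : finrank K V₁ = finrank K W₁ := by
    have := hf.finrank_le hsub
    lia
  refine ⟨V₁, W₁, hsub, heq, Nat.pos_of_ne_zero fun h0 => ?_,
    (Submodule.finrank_le V₁).lt_of_ne fun hn => ?_⟩
  · exact hbot (Submodule.finrank_eq_zero.mp h0) (Submodule.finrank_eq_zero.mp (heq ▸ h0))
  · exact htop (Submodule.eq_top_of_finrank_eq hn)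
      (Submodule.eq_top_of_finrank_eq (heq.symm.trans (hn.trans hVW)))

/-- The conditions on `g` say that `f` and `g` agree on the subrepresentation `(V₁, W₁)` and on the
quotient by it. -/
theorem of_eqOn_of_sub_mem [FiniteDimensional K V] [FiniteDimensional K W]
    (hf : KroneckerSemistable f) {V₁ : Submodule K V} {W₁ : Submodule K W}
    (hsub : ∀ i, V₁.map (f i) ≤ W₁) (hrank : finrank K V₁ = finrank K W₁)
    (heq : ∀ i, EqOn (g i) (f i) V₁) (hmem : ∀ i x, g i x - f i x ∈ W₁) :
    KroneckerSemistable g := by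
  refine of_finrank_le fun V₂ W₂ hg => ?_
  have hinf : finrank K ↥(V₂ ⊓ V₁) ≤ finrank K ↥(W₂ ⊓ W₁) := by
    refine hf.finrank_le fun i => ?_
    rintro _ ⟨x, ⟨hx₂, hx₁⟩, rfl⟩
    exact ⟨heq i hx₁ ▸ hg i ⟨x, hx₂, rfl⟩, hsub i ⟨x, hx₁, rfl⟩⟩
  have hsup : finrank K ↥(V₂ ⊔ V₁) ≤ finrank K ↥(W₂ ⊔ W₁) := by
    refine hf.finrank_le fun i => ?_
    rw [Submodule.map_sup]
    refine sup_le ?_ ((hsub i).trans le_sup_right)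
    rintro _ ⟨x, hx, rfl⟩
    rw [← sub_sub_cancel (g i x) (f i x)]
    exact Submodule.sub_mem_sup (hg i ⟨x, hx, rfl⟩) (hmem i x)
  have hV := Submodule.finrank_sup_add_finrank_inf_eq V₂ V₁
  have hW := Submodule.finrank_sup_add_finrank_inf_eq W₂ W₁
  lia

end KroneckerSemistable

end LinearMaps

section Matrices

variable {ι K m n : Type*} [Field K]

/-- The span of the standard basis vectors indexed by `s`, encoded by the vanishing of the other
coordinates. -/
def coordSubspace (K : Type*) [Field K] (s : Finset n) : Submodule K (n → K) :=
  ⨅ j ∈ (sᶜ : Set n), (LinearMap.proj j : (n → K) →ₗ[K] K).ker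

theorem mem_coordSubspace {s : Finset n} {x : n → K} :
    x ∈ coordSubspace K s ↔ ∀ j ∉ s, x j = 0 := by
  simp [coordSubspace]

theorem finrank_coordSubspace (s : Finset n) : finrank K (coordSubspace K s) = s.card := by
  classical
  have e : coordSubspace K s ≃ₗ[K] s → K :=
    LinearMap.iInfKerProjEquiv K (fun _ : n => K) disjoint_compl_right (union_compl_self _).ge
  rw [e.finrank_eq, finrank_fintype_fun_eq_card, Fintype.card_coe]

/-- `A` with its off-diagonal blocks with respect to the partition `s ∪ sᶜ` replaced by zero.
If `A` preserves `coordSubspace K s`, this is the direct sum of its restriction to that subspace and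
its action on the quotient. -/
def blockDiagPart [DecidableEq n] (s : Finset n) (A : Matrix n n K) : Matrix n n K :=
  of fun j k => if (j ∈ s ↔ k ∈ s) then A j k else 0

variable [Fintype n]

theorem map_mulVecLin_coordSubspace_le_iff {s : Finset n} {A : Matrix n n K} :
    (coordSubspace K s).map A.mulVecLin ≤ coordSubspace K s ↔
      ∀ j ∉ s, ∀ k ∈ s, A j k = 0 := by
  classical
  constructor
  · intro h j hj k hk
    have hmem : Pi.single k 1 ∈ coordSubspace K s :=
      mem_coordSubspace.mpr fun l hl => Pi.single_eq_of_ne (ne_of_mem_of_not_mem hk hl).symm 1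
    simpa using mem_coordSubspace.mp (h ⟨_, hmem, rfl⟩) j hj
  · rintro h _ ⟨x, hx, rfl⟩
    refine mem_coordSubspace.mpr fun j hj => Finset.sum_eq_zero fun k _ => ?_
    by_cases hk : k ∈ s
    · exact mul_eq_zero_of_left (h j hj k hk) _
    · exact mul_eq_zero_of_right _ (mem_coordSubspace.mp hx k hk)

theorem KroneckerSemistable.exists_col_ne_zero {Y : ι → Matrix m n K}
    (hY : KroneckerSemistable fun i => (Y i).mulVecLin) (k : n) : ∃ i, (Y i).col k ≠ 0 := by
  classical
  by_contra! hcol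
  have hmem : Pi.single k 1 ∈ ⨅ i, (Y i).mulVecLin.ker := by
    simpa only [Submodule.mem_iInf, LinearMap.mem_ker, mulVecLin_apply, mulVec_single_one]
  rw [hY.iInf_ker_eq_bot, Submodule.mem_bot, Pi.single_eq_zero_iff] at hmem
  exact one_ne_zero hmem

theorem KroneckerSemistable.exists_eq_diagonal {s : Finset (Fin 2)}
    {X : ι → Matrix (Fin 2) (Fin 2) K} (hss : KroneckerSemistable fun i => (X i).mulVecLin)
    (hne : s.Nonempty) (huniv : s ≠ Finset.univ)
    (hX : ∀ i j k, ¬(j ∈ s ↔ k ∈ s) → X i j k = 0) :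
    ∃ a d : ι → K, a ≠ 0 ∧ d ≠ 0 ∧ X = fun i => !![a i, 0; 0, d i] := by
  have hs : ¬((0 : Fin 2) ∈ s ↔ 1 ∈ s) := by
    clear hX
    revert s
    decide
  have hX01 i : X i 0 1 = 0 := hX i 0 1 hs
  have hX10 i : X i 1 0 = 0 := hX i 1 0 (mt Iff.symm hs)
  refine ⟨fun i => X i 0 0, fun i => X i 1 1, fun ha => ?_, fun hd => ?_, ?_⟩
  · obtain ⟨i, hi⟩ := hss.exists_col_ne_zero 0
    exact hi (funext (Fin.forall_fin_two.mpr ⟨congrFun ha i, hX10 i⟩))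
  · obtain ⟨i, hi⟩ := hss.exists_col_ne_zero 1
    exact hi (funext (Fin.forall_fin_two.mpr ⟨hX01 i, congrFun hd i⟩))
  · funext i
    rw [eta_fin_two (X i), hX01, hX10]

variable [DecidableEq n]

theorem exists_GL_map_mulVecLin_eq {U U' : Submodule K (n → K)}
    (h : finrank K U = finrank K U') : ∃ g : GL n K, U.map g.val.mulVecLin = U' := by
  let e : U ≃ₗ[K] U' := LinearEquiv.ofFinrankEq U U' h
  obtain ⟨g, hg⟩ := Submodule.exists_linearEquiv_restrict_eq e
  refine ⟨GeneralLinearGroup.toLin.symm (.ofLinearEquiv g), ?_⟩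
  rw [← GeneralLinearGroup.coe_toLin, MulEquiv.apply_symm_apply]
  refine Submodule.eq_of_le_of_finrank_eq ?_ ((LinearEquiv.finrank_map_eq g U).trans h)
  rintro _ ⟨x, hx, rfl⟩
  exact hg ⟨x, hx⟩ ▸ (e ⟨x, hx⟩).2

section Orbit

variable [Fintype m] [DecidableEq m]

/-- The orbit of a representation of the Kronecker quiver, given by matrices, under change of basis
at both vertices. -/
def kroneckerOrbit (Y : ι → Matrix m n K) : Set (ι → Matrix m n K) :=
  {X | ∃ (g₁ : GL n K) (g₂ : GL m K), ∀ i, X i = g₂.val * Y i * g₁⁻¹.val}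

theorem kroneckerOrbit_subset {Y Z : ι → Matrix m n K} (hZ : Z ∈ kroneckerOrbit Y) :
    kroneckerOrbit Z ⊆ kroneckerOrbit Y := by
  obtain ⟨g₁, g₂, hZ⟩ := hZ
  rintro X ⟨h₁, h₂, hX⟩
  refine ⟨h₁ * g₁, h₂ * g₂, fun i => ?_⟩
  simp only [hX, hZ, _root_.mul_inv_rev, Units.val_mul, Matrix.mul_assoc]

theorem KroneckerSemistable.of_mem_kroneckerOrbit {Y Z : ι → Matrix m n K}
    (hY : KroneckerSemistable fun i => (Y i).mulVecLin) (hZ : Z ∈ kroneckerOrbit Y) :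
    KroneckerSemistable fun i => (Z i).mulVecLin := by
  obtain ⟨g₁, g₂, hZ⟩ := hZ
  convert hY.conj (GeneralLinearGroup.toLin g₁).toLinearEquiv
    (GeneralLinearGroup.toLin g₂).toLinearEquiv with i
  rw [hZ, mulVecLin_mul, mulVecLin_mul]
  rfl

end Orbit

theorem KroneckerSemistable.exists_blockTriangular_mem_kroneckerOrbit {Y : ι → Matrix n n K}
    (hss : KroneckerSemistable fun i => (Y i).mulVecLin)
    (hns : ¬KroneckerStable fun i => (Y i).mulVecLin) :
    ∃ s : Finset n, s.Nonempty ∧ s ≠ Finset.univ ∧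
      ∃ Z ∈ kroneckerOrbit Y, ∀ i, ∀ j ∉ s, ∀ k ∈ s, Z i j k = 0 := by
  obtain ⟨V₁, W₁, hsub, hVW, hpos, hlt⟩ := hss.exists_finrank_eq_of_not_stable hns rfl
  rw [finrank_fintype_fun_eq_card, ← Finset.card_univ] at hlt
  obtain ⟨s, -, hs⟩ := Finset.exists_subset_card_eq hlt.le
  rw [← hs] at hpos hlt
  refine ⟨s, Finset.card_pos.mp hpos, fun h => hlt.ne (congrArg _ h), ?_⟩
  have hVs : finrank K V₁ = finrank K (coordSubspace K s) := by rw [finrank_coordSubspace, hs]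
  obtain ⟨g₁, hg₁⟩ := exists_GL_map_mulVecLin_eq hVs
  obtain ⟨g₂, hg₂⟩ := exists_GL_map_mulVecLin_eq (hVW.symm.trans hVs)
  refine ⟨fun i => g₂.val * Y i * g₁⁻¹.val, ⟨g₁, g₂, fun _ => rfl⟩, fun i => ?_⟩
  refine map_mulVecLin_coordSubspace_le_iff.mp ?_
  calc (coordSubspace K s).map (g₂.val * Y i * g₁⁻¹.val).mulVecLin
      = (V₁.map (Y i).mulVecLin).map g₂.val.mulVecLin := by
        rw [← hg₁, ← Submodule.map_comp, ← Submodule.map_comp, ← mulVecLin_mul, ← mulVecLin_mul,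
          Units.inv_mul_cancel_right]
    _ ≤ W₁.map g₂.val.mulVecLin := Submodule.map_mono (hsub i)
    _ = coordSubspace K s := hg₂

theorem KroneckerSemistable.blockDiagPart_of_blockTriangular {s : Finset n} {Z : ι → Matrix n n K}
    (hss : KroneckerSemistable fun i => (Z i).mulVecLin)
    (hZ : ∀ i, ∀ j ∉ s, ∀ k ∈ s, Z i j k = 0) :
    KroneckerSemistable fun i => (blockDiagPart s (Z i)).mulVecLin := by
  refine hss.of_eqOn_of_sub_mem (V₁ := coordSubspace K s) (W₁ := coordSubspace K s)
    (fun i => map_mulVecLin_coordSubspace_le_iff.mpr (hZ i)) rfl ?_ ?_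
  · intro i x hx
    ext j
    refine Finset.sum_congr rfl fun k _ => ?_
    by_cases hk : k ∈ s
    · by_cases hj : j ∈ s <;> simp [blockDiagPart, hj, hk, hZ]
    · simp [mem_coordSubspace.mp hx k hk]
  · intro i x
    refine mem_coordSubspace.mpr fun j hj => sub_eq_zero.mpr ?_
    refine Finset.sum_congr rfl fun k _ => ?_
    by_cases hk : k ∈ s <;> simp [blockDiagPart, hj, hk, hZ]

/-- These are the conjugates of the `Z i` by the diagonal matrix with entries `t` on `s` and `1` off
`s`. -/
theorem blockDiagPart_add_smul_mem_kroneckerOrbit {s : Finset n} {Z : ι → Matrix n n K}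
    (hZ : ∀ i, ∀ j ∉ s, ∀ k ∈ s, Z i j k = 0) {t : K} (ht : t ≠ 0) :
    (fun i => blockDiagPart s (Z i) + t • (Z i - blockDiagPart s (Z i))) ∈ kroneckerOrbit Z := by
  let u : n → Kˣ := fun j => if j ∈ s then Units.mk0 t ht else 1
  let g : GL n K := Units.map (diagonalRingHom n K).toMonoidHom (MulEquiv.piUnits.symm u)
  have hg : g.val = diagonal fun j => (u j).val := rfl
  have hg' : g⁻¹.val = diagonal fun j => (u j)⁻¹.val := rfl
  refine ⟨g, g, fun i => ?_⟩
  ext j k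
  rw [hg, hg', mul_diagonal, diagonal_mul]
  by_cases hj : j ∈ s <;> by_cases hk : k ∈ s <;>
    simp [blockDiagPart, u, hj, hk, hZ, ht, mul_right_comm t _ t⁻¹]

variable [TopologicalSpace K] [IsTopologicalSemiring K] [(𝓝[≠] (0 : K)).NeBot]

theorem blockDiagPart_mem_closure_kroneckerOrbit {s : Finset n} {Z : ι → Matrix n n K}
    (hZ : ∀ i, ∀ j ∉ s, ∀ k ∈ s, Z i j k = 0) :
    (fun i => blockDiagPart s (Z i)) ∈ closure (kroneckerOrbit Z) := by
  let γ : K → ι → Matrix n n K := fun t i =>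
    blockDiagPart s (Z i) + t • (Z i - blockDiagPart s (Z i))
  have hγ : Tendsto γ (𝓝[≠] 0) (𝓝 (γ 0)) := by
    have : Continuous γ := by fun_prop
    exact this.continuousWithinAt
  have hγ0 : γ 0 = fun i => blockDiagPart s (Z i) := by
    simp only [γ, zero_smul, add_zero]
  rw [← hγ0]
  refine mem_closure_of_tendsto hγ ?_
  filter_upwards [self_mem_nhdsWithin] with t ht
  exact blockDiagPart_add_smul_mem_kroneckerOrbit hZ ht

theorem strictly_semistable_degenerates_general {Y : ι → Matrix n n K}
    (hss : KroneckerSemistable fun i => (Y i).mulVecLin)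
    (hns : ¬KroneckerStable fun i => (Y i).mulVecLin) :
    ∃ s : Finset n, s.Nonempty ∧ s ≠ Finset.univ ∧ ∃ X ∈ closure (kroneckerOrbit Y),
      (KroneckerSemistable fun i => (X i).mulVecLin) ∧
        ∀ i j k, ¬(j ∈ s ↔ k ∈ s) → X i j k = 0 := by
  obtain ⟨s, hne, huniv, Z, hZY, hZ⟩ := hss.exists_blockTriangular_mem_kroneckerOrbit hns
  exact ⟨s, hne, huniv, _,
    closure_mono (kroneckerOrbit_subset hZY) (blockDiagPart_mem_closure_kroneckerOrbit hZ),
    (hss.of_mem_kroneckerOrbit hZY).blockDiagPart_of_blockTriangular hZ,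
    fun _ _ _ hjk => if_neg hjk⟩

end Matrices

/-- The closure of the `GL₂(ℂ) × GL₂(ℂ)`-orbit of a strictly `Θ`-semistable
representation of `Q₃` with dimension vector `(2,2)` contains a triple of
diagonal matrices `(diag(a₁,d₁), diag(a₂,d₂), diag(a₃,d₃))` with
`(a₁,a₂,a₃) ≠ 0` and `(d₁,d₂,d₃) ≠ 0`: every strictly semistable representation
degenerates to a direct sum of two nonzero representations of dimension vector
`(1,1)`. -/
theorem strictly_semistable_degenerates (Y : Fin 3 → M2)
    (hss : ThetaSemistable Y) (hns : ¬ThetaStable Y) :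
    ∃ a d : Fin 3 → ℂ, a ≠ 0 ∧ d ≠ 0 ∧
      ((!![a 0, 0; 0, d 0], !![a 1, 0; 0, d 1], !![a 2, 0; 0, d 2]) :
          M2 × M2 × M2) ∈
        closure {p : M2 × M2 × M2 |
          ∃ g₁ g₂ : M2, IsUnit g₁.det ∧ IsUnit g₂.det ∧
            p = (g₂ * Y 0 * g₁⁻¹, g₂ * Y 1 * g₁⁻¹, g₂ * Y 2 * g₁⁻¹)} := by
  obtain ⟨s, hne, huniv, X, hX, hXss, hblock⟩ := strictly_semistable_degenerates_general hss hns
  obtain ⟨a, d, ha, hd, rfl⟩ := hXss.exists_eq_diagonal hne huniv hblock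
  refine ⟨a, d, ha, hd, map_mem_closure
    (f := fun X : Fin 3 → M2 => (X 0, X 1, X 2)) (by fun_prop) hX ?_⟩
  rintro X ⟨g₁, g₂, hg⟩
  refine ⟨g₁, g₂, g₁.isUnit.map detMonoidHom, g₂.isUnit.map detMonoidHom, ?_⟩
  simp only [hg, coe_units_inv]
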